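/- Let A be a unital C*-algebra and let V₀, V₁ ∈ A be self-adjoint unitaries such that V₁ − V₀ is invertible in A. Define F := ½·V₀(V₁V₀+1)(V₁V₀−1)⁻¹·s, where s is the positive square root of 2 − V₀V₁ − V₁V₀. Then F² = ¼·(2 + V₀V₁ + V₁V₀) and 1 − F² = ¼·(V₀−V₁)². -/

import Mathlib

/-!
Put `p = V₀ + V₁` and `d = V₁ - V₀`. As `V₀² = V₁²`, we have `p V₁ = V₀ p` and `d V₁ = -V₀ d`, so
that `p` and `d` anticommute, while `p²` and `d²` commute with `V₀` and `V₁`. The relative Cayley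
transform is `T = V₀ p d⁻¹`, and moving `V₀` and `p` past `d⁻¹` gives `T² = p² d⁻²`. Since `s² = d²`
and `s` commutes with `T`, it follows that `(½ T s)² = ¼ T² d² = ¼ p²`; finally `p² + d² = 4`.
-/

section Semiconj

theorem semiconjBy_add_of_mul_self_eq {R : Type*} [NonUnitalNonAssocSemiring R] {a b : R}
    (h : a * a = b * b) : SemiconjBy (a + b) a b := by
  rw [SemiconjBy, add_mul, mul_add, h, add_comm]

theorem semiconjBy_sub_of_mul_self_eq {R : Type*} [NonUnitalNonAssocRing R] {a b : R}
    (h : a * a = b * b) : SemiconjBy (a - b) a (-b) := by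
  rw [SemiconjBy, sub_mul, neg_mul, mul_sub, neg_sub, h]

theorem semiconjBy_sub_add_of_mul_self_eq {R : Type*} [NonUnitalNonAssocRing R] {a b : R}
    (h : a * a = b * b) : SemiconjBy (a - b) (a + b) (-(a + b)) := by
  have ha : SemiconjBy (a - b) a (-b) := semiconjBy_sub_of_mul_self_eq h
  have hb : SemiconjBy (a - b) b (-a) := by
    simpa only [neg_sub] using (semiconjBy_sub_of_mul_self_eq h.symm).neg_left
  simpa only [neg_add_rev] using ha.add_right hb

theorem commute_sub_mul_sub_of_mul_self_eq {R : Type*} [NonUnitalRing R] {a b : R}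
    (h : a * a = b * b) : Commute ((a - b) * (a - b)) a := by
  have ha : SemiconjBy (a - b) a (-b) := semiconjBy_sub_of_mul_self_eq h
  have hb : SemiconjBy (a - b) (-b) a := by
    simpa only [neg_sub, neg_neg] using
      (semiconjBy_sub_of_mul_self_eq h.symm).neg_left.neg_right
  exact hb.mul_left ha

end Semiconj

section Involutions

variable {R : Type*} [Ring R] {a b : R}

theorem add_sq_of_mul_self_eq_one (ha : a * a = 1) (hb : b * b = 1) :
    (a + b) ^ 2 = 2 + a * b + b * a := by
  rw [sq, add_mul, mul_add, mul_add, ha, hb, ← one_add_one_eq_two]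
  abel

theorem sub_sq_of_mul_self_eq_one (ha : a * a = 1) (hb : b * b = 1) :
    (a - b) ^ 2 = 2 - a * b - b * a := by
  rw [sq, sub_mul, mul_sub, mul_sub, ha, hb, ← one_add_one_eq_two]
  abel

theorem add_sq_add_sub_sq_of_mul_self_eq_one (ha : a * a = 1) (hb : b * b = 1) :
    (a + b) ^ 2 + (a - b) ^ 2 = 4 := by
  rw [add_sq_of_mul_self_eq_one ha hb, sub_sq_of_mul_self_eq_one ha hb, ← two_add_two_eq_four]
  abel

end Involutions

theorem commute_ringInverse_right {M : Type*} [MonoidWithZero M] {x y : M} (h : Commute x y) :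
    Commute x (Ring.inverse y) := by
  by_cases hy : IsUnit y
  · obtain ⟨u, rfl⟩ := hy
    rw [Ring.inverse_unit]
    exact h.units_inv_right
  · rw [Ring.inverse_non_unit y hy]
    exact Commute.zero_right x

/-- The relative Cayley transform `a (b a + 1) (b a - 1)⁻¹` of a pair of involutions. As
`Ring.inverse` is total, it is defined for all `a` and `b`, with value `0` unless `b a - 1` is
invertible. -/
noncomputable def relativeCayley {R : Type*} [Ring R] (a b : R) : R :=
  a * (b * a + 1) * Ring.inverse (b * a - 1)

namespace relativeCayley

variable {R : Type*} [Ring R] {a b s : R}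

theorem commute_right (hsa : Commute s a) (hsb : Commute s b) :
    Commute s (relativeCayley a b) := by
  have hsba : Commute s (b * a) := hsb.mul_right hsa
  have hs1 : Commute s 1 := .one_right s
  exact (hsa.mul_right (hsba.add_right hs1)).mul_right
    (commute_ringInverse_right (hsba.sub_right hs1))

theorem mul_sub_eq (ha : a * a = 1) (hinv : IsUnit (b - a)) :
    relativeCayley a b * (b - a) = a * (b + a) := by
  have hd : (b * a - 1) * a = b - a := by rw [sub_mul, mul_assoc, ha, mul_one, one_mul]
  have hp : (b * a + 1) * a = b + a := by rw [add_mul, mul_assoc, ha, mul_one, one_mul]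
  have hunit : IsUnit (b * a - 1) :=
    ((Units.mk a a ha ha).isUnit_mul_units (b * a - 1)).mp (hd ▸ hinv)
  calc relativeCayley a b * (b - a)
      = a * (b * a + 1) * (Ring.inverse (b * a - 1) * ((b * a - 1) * a)) := by
        rw [hd, relativeCayley, mul_assoc]
    _ = a * (b + a) := by rw [Ring.inverse_mul_cancel_left _ _ hunit, mul_assoc, hp]

theorem sq_mul_sub_sq (ha : a * a = 1) (hb : b * b = 1) (hinv : IsUnit (b - a)) :
    relativeCayley a b ^ 2 * (b - a) ^ 2 = (b + a) ^ 2 := by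
  set T := relativeCayley a b
  set p := b + a
  set d := b - a
  have hba : b * b = a * a := hb.trans ha.symm
  have hTd : T * d = a * p := mul_sub_eq ha hinv
  have hpb : p * b = a * p := semiconjBy_add_of_mul_self_eq hba
  have hdb : d * b = -(a * d) := by
    rw [← neg_mul]
    exact semiconjBy_sub_of_mul_self_eq hba
  have hdp : d * p = -(p * d) := by
    rw [← neg_mul]
    exact semiconjBy_sub_add_of_mul_self_eq hba
  calc T ^ 2 * d ^ 2
      = T * (T * d) * d := by simp only [sq, mul_assoc]
    _ = T * (a * (p * d)) := by simp only [hTd, mul_assoc]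
    _ = T * (-(a * d) * p) := by rw [neg_mul, mul_assoc a, hdp, mul_neg a, neg_neg]
    _ = T * d * (b * p) := by rw [← hdb]; simp only [mul_assoc]
    _ = a * (p * b) * p := by simp only [hTd, mul_assoc]
    _ = p ^ 2 := by rw [hpb, ← mul_assoc, ha, one_mul, sq]

theorem mul_sq (ha : a * a = 1) (hb : b * b = 1) (hinv : IsUnit (b - a))
    (hsa : Commute s a) (hsb : Commute s b) (hs : s ^ 2 = (b - a) ^ 2) :
    (relativeCayley a b * s) ^ 2 = (b + a) ^ 2 := by
  rw [(commute_right hsa hsb).symm.mul_pow, hs, sq_mul_sub_sq ha hb hinv]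

end relativeCayley

theorem commute_cfcSqrt {A : Type*} [NonUnitalRing A] [StarRing A] [TopologicalSpace A]
    [IsTopologicalRing A] [T2Space A] [PartialOrder A] [StarOrderedRing A] [Module ℝ A]
    [IsScalarTower ℝ A A] [SMulCommClass ℝ A A] [NonnegSpectrumClass ℝ A]
    [NonUnitalContinuousFunctionalCalculus ℝ A IsSelfAdjoint] {a b : A} (h : Commute a b) :
    Commute (CFC.sqrt a) b :=
  h.cfcₙ_nnreal NNReal.sqrt

theorem bounded_transform_sq_general {𝕜 A : Type*} [Field 𝕜] [NeZero (2 : 𝕜)] [Ring A]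
    [Algebra 𝕜 A] [StarRing A] [TopologicalSpace A] [IsTopologicalRing A] [T2Space A]
    [PartialOrder A] [StarOrderedRing A] [Algebra ℝ A] [NonnegSpectrumClass ℝ A]
    [NonUnitalContinuousFunctionalCalculus ℝ A IsSelfAdjoint]
    (V₀ V₁ : A) (hV₀sq : V₀ ^ 2 = 1) (hV₁sq : V₁ ^ 2 = 1) (hpos : 0 ≤ (V₁ - V₀) ^ 2)
    (hinv : IsUnit (V₁ - V₀))
    (s : A) (hs : s = CFC.sqrt (2 - V₀ * V₁ - V₁ * V₀))
    (F : A) (hF : F = (1 / 2 : 𝕜) • (V₀ * (V₁ * V₀ + 1) * Ring.inverse (V₁ * V₀ - 1) * s)) :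
    F ^ 2 = (1 / 4 : 𝕜) • (2 + V₀ * V₁ + V₁ * V₀) ∧
      1 - F ^ 2 = (1 / 4 : 𝕜) • (V₀ - V₁) ^ 2 := by
  have h₀ : V₀ * V₀ = 1 := by rw [← sq, hV₀sq]
  have h₁ : V₁ * V₁ = 1 := by rw [← sq, hV₁sq]
  have hsub : (V₁ - V₀) ^ 2 = (V₀ - V₁) ^ 2 := by rw [← neg_sub, neg_sq]
  rw [← sub_sq_of_mul_self_eq_one h₀ h₁] at hs
  have hs₀ : Commute s V₀ := by
    rw [hs, sq]
    exact commute_cfcSqrt (commute_sub_mul_sub_of_mul_self_eq (h₀.trans h₁.symm))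
  have hs₁ : Commute s V₁ := by
    rw [hs, ← hsub, sq]
    exact commute_cfcSqrt (commute_sub_mul_sub_of_mul_self_eq (h₁.trans h₀.symm))
  have hss : s ^ 2 = (V₁ - V₀) ^ 2 := by rw [hs, ← hsub, sq, CFC.sqrt_mul_sqrt_self _ hpos]
  have hF2 : F ^ 2 = (1 / 4 : 𝕜) • (V₀ + V₁) ^ 2 := by
    rw [hF, smul_pow, ← relativeCayley, relativeCayley.mul_sq h₀ h₁ hinv hs₀ hs₁ hss, add_comm V₁]
    norm_num
  have hone : (1 : A) = (1 / 4 : 𝕜) • ((V₀ + V₁) ^ 2 + (V₀ - V₁) ^ 2) := by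
    have hfour : (4 : 𝕜) ≠ 0 := by
      rw [← two_add_two_eq_four, ← two_mul]
      exact mul_ne_zero two_ne_zero two_ne_zero
    rw [add_sq_add_sub_sq_of_mul_self_eq_one h₀ h₁, one_div, eq_inv_smul_iff₀ hfour,
      ← Algebra.algebraMap_eq_smul_one, map_ofNat]
  refine ⟨by rw [hF2, add_sq_of_mul_self_eq_one h₀ h₁], ?_⟩
  rw [hF2, hone, smul_add, add_sub_cancel_left]

/-- For self-adjoint unitaries `V₀, V₁` with `V₁ − V₀` invertible, the
bounded transform `F = ½ V₀(V₁V₀+1)(V₁V₀−1)⁻¹ s`, where `s` is the positive square root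
of `2 − V₀V₁ − V₁V₀`, satisfies `F² = ¼(2 + V₀V₁ + V₁V₀)` and `1 − F² = ¼(V₀−V₁)²`. -/
theorem bounded_transform_sq {A : Type*} [CStarAlgebra A] [PartialOrder A]
    [StarOrderedRing A]
    (V₀ V₁ : A) (hV₀sa : star V₀ = V₀) (hV₀sq : V₀ ^ 2 = 1)
    (hV₁sa : star V₁ = V₁) (hV₁sq : V₁ ^ 2 = 1)
    (hinv : IsUnit (V₁ - V₀))
    (s : A) (hs : s = CFC.sqrt (2 - V₀ * V₁ - V₁ * V₀))
    (F : A) (hF : F = (1 / 2 : ℂ) • (V₀ * (V₁ * V₀ + 1) * Ring.inverse (V₁ * V₀ - 1) * s)) :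
    F ^ 2 = (1 / 4 : ℂ) • (2 + V₀ * V₁ + V₁ * V₀) ∧
      1 - F ^ 2 = (1 / 4 : ℂ) • (V₀ - V₁) ^ 2 :=
  bounded_transform_sq_general V₀ V₁ hV₀sq hV₁sq (IsSelfAdjoint.sub hV₁sa hV₀sa).sq_nonneg
    hinv s hs F hF
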